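/- Let A be a Banach algebra such that A ⊗̂ A^{op} is amenable, and suppose that each of the topologies on A induced by the seminorm families ρ_a(b) = ‖ab‖ and γ_a(b) = ‖ba‖ (for a ∈ A) is stronger than the weak topology on A. Then A is amenable. -/

import Mathlib

open Filter Topology MulOpposite

/-- A Banach `A`-bimodule structure on the Banach space `X`:
`L a x = a • x` (left action), `R a x = x • a` (right action),
given as continuous bilinear maps. -/
structure BanachBimodule (A X : Type*) [NonUnitalNormedRing A] [NormedSpace ℂ A]
    [NormedAddCommGroup X] [NormedSpace ℂ X] where
  L : A →L[ℂ] X →L[ℂ] X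
  R : A →L[ℂ] X →L[ℂ] X
  L_mul : ∀ a b : A, L (a * b) = (L a).comp (L b)
  R_mul : ∀ a b : A, R (a * b) = (R b).comp (R a)
  LR_comm : ∀ (a b : A) (x : X), R b (L a x) = L a (R b x)

/-- `D : A → X*` is a derivation into the dual Banach bimodule of `X`, written
pointwise: `D(ab) = a·D(b) + D(a)·b` where `(a·f)(x) = f(x·a)`, `(f·a)(x) = f(a·x)`. -/
def IsDualDerivation {A X : Type*} [NonUnitalNormedRing A] [NormedSpace ℂ A]
    [NormedAddCommGroup X] [NormedSpace ℂ X] (σ : BanachBimodule A X)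
    (D : A →L[ℂ] (X →L[ℂ] ℂ)) : Prop :=
  ∀ (a b : A) (x : X), D (a * b) x = D b (σ.R a x) + D a (σ.L b x)

/-- `D` is inner: `D a = a·f − f·a` for some `f ∈ X*`. -/
def IsInnerDualDerivation {A X : Type*} [NonUnitalNormedRing A] [NormedSpace ℂ A]
    [NormedAddCommGroup X] [NormedSpace ℂ X] (σ : BanachBimodule A X)
    (D : A →L[ℂ] (X →L[ℂ] ℂ)) : Prop :=
  ∃ f : X →L[ℂ] ℂ, ∀ (a : A) (x : X), D a x = f (σ.R a x) - f (σ.L a x)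

/-- A Banach algebra is amenable if every continuous derivation into every dual
Banach bimodule is inner. -/
def Amenable (A : Type*) [NonUnitalNormedRing A] [NormedSpace ℂ A] : Prop :=
  ∀ (X : Type) (_ : NormedAddCommGroup X) (_ : NormedSpace ℂ X) (_ : CompleteSpace X)
    (σ : BanachBimodule A X) (D : A →L[ℂ] (X →L[ℂ] ℂ)),
    IsDualDerivation σ D → IsInnerDualDerivation σ D

/-- Weak amenability: every continuous derivation `D : A → A*` into the dual
bimodule (`(a·f)(x) = f(xa)`, `(f·a)(x) = f(ax)`) is inner. -/
def WeaklyAmenable (A : Type*) [NonUnitalNormedRing A] [NormedSpace ℂ A] : Prop :=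
  ∀ D : A →L[ℂ] (A →L[ℂ] ℂ),
    (∀ a b x : A, D (a * b) x = D b (x * a) + D a (b * x)) →
    ∃ f : A →L[ℂ] ℂ, ∀ a x : A, D a x = f (x * a) - f (a * x)

/-- A bounded net in a normed space. -/
structure BddNet (X : Type*) [Norm X] where
  ι : Type
  [dir : SemilatticeSup ι]
  [ne : Nonempty ι]
  z : ι → X
  C : ℝ
  bdd : ∀ i, ‖z i‖ ≤ C

/-- The `atTop` filter of the (directed) index of a bounded net. -/
def BddNet.filter {X : Type*} [Norm X] (S : BddNet X) : Filter S.ι :=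
  letI := S.dir; Filter.atTop

/-- The bounded net `S` is a two-sided bounded approximate identity for `A`. -/
def IsBAI {A : Type*} [NonUnitalNormedRing A] (S : BddNet A) : Prop :=
  ∀ a : A, Tendsto (fun i => a * S.z i) S.filter (nhds a) ∧
           Tendsto (fun i => S.z i * a) S.filter (nhds a)

/-- `A` has a (two-sided) bounded approximate identity. -/
def HasBAI (A : Type*) [NonUnitalNormedRing A] : Prop := ∃ S : BddNet A, IsBAI S

/-- `T`, together with the continuous bilinear map `ι`, is (a realization of) the
projective tensor product `A ⊗̂ B` of the Banach algebras `A` and `B`: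
`ι` is multiplicative ((a⊗b)(c⊗d) = ac⊗bd), satisfies the cross-norm estimate,
has dense linear span, and has the universal (norm-decreasing lifting) property
of the projective tensor norm. -/
structure IsProjTensorProduct (A B T : Type*)
    [NonUnitalNormedRing A] [NormedSpace ℂ A] [NonUnitalNormedRing B] [NormedSpace ℂ B]
    [NonUnitalNormedRing T] [NormedSpace ℂ T] [CompleteSpace T] where
  ι : A →L[ℂ] B →L[ℂ] T
  norm_ι : ∀ a b, ‖ι a b‖ ≤ ‖a‖ * ‖b‖
  ι_mul : ∀ (a c : A) (b d : B), ι a b * ι c d = ι (a * c) (b * d)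
  dense_span : Dense (Submodule.span ℂ (Set.range fun p : A × B => ι p.1 p.2) : Set T)
  lift : ∀ (E : Type) (_ : NormedAddCommGroup E) (_ : NormedSpace ℂ E) (_ : CompleteSpace E)
    (φ : A →L[ℂ] B →L[ℂ] E), ∃ Φ : T →L[ℂ] E, (∀ a b, Φ (ι a b) = φ a b) ∧ ‖Φ‖ ≤ ‖φ‖

/-!
Let `D : A → X*` be a derivation and let `B` act on `B*`. Then `a ⊗ b ↦ D a ⊗ b` is a derivation of
`A ⊗̂ B` into the dual of `X ⊗̂ B*`, so that amenability of `A ⊗̂ B` yields a bounded bilinear form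
`F` with `D(a)(x) y(b) = F(x·a, y·b) - F(a·x, b·y)`. If `X = A*` with one of its two actions
replaced by zero, then `F` produces a right unit `u`, respectively a left unit `v`, of `B**` for the
action on `B*`, and `U = u + v - u □ v` is a two-sided one. Choose a functional of the form
`φ = d·(z·c)` with `U(φ) ≠ 0`. Applying `U` in the variable `b` to the identity for `y = φ` turns
`b ↦ F(x, φ·b)` and `b ↦ F(x, b·φ)` into `F(x, φ)`, so that `U(φ)⁻¹ F(·, φ)` implements `D`.

Amenability is tested on modules in `Type`, to which `A*` need not belong. Hence `A` is first
replaced by its image in the operators on a space in `Type` built from `X`, through which the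
actions on `X` and the derivation factor.
-/

open ContinuousLinearMap NormedSpace

set_option maxSynthPendingDepth 3

namespace BanachBimodule

variable {A X : Type*} [NonUnitalNormedRing A] [NormedSpace ℂ A]
  [NormedAddCommGroup X] [NormedSpace ℂ X]

/-- The dual bimodule `X*` of a Banach bimodule `X`, with `(a·f)(x) = f(x·a)` and
`(f·a)(x) = f(a·x)`. -/
noncomputable def dual (σ : BanachBimodule A X) : BanachBimodule A (X →L[ℂ] ℂ) where
  L := (compL ℂ X X ℂ).flip.comp σ.R
  R := (compL ℂ X X ℂ).flip.comp σ.L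
  L_mul a b := by ext; simp [σ.R_mul]
  R_mul a b := by ext; simp [σ.L_mul]
  LR_comm a b f := by ext; simp [σ.LR_comm]

@[simp]
theorem dual_L_apply (σ : BanachBimodule A X) (a : A) (f : X →L[ℂ] ℂ) (x : X) :
    σ.dual.L a f x = f (σ.R a x) := rfl

@[simp]
theorem dual_R_apply (σ : BanachBimodule A X) (a : A) (f : X →L[ℂ] ℂ) (x : X) :
    σ.dual.R a f x = f (σ.L a x) := rfl

/-- The bimodule obtained from `σ` by replacing the left action by zero. -/
noncomputable def zeroLeft (σ : BanachBimodule A X) : BanachBimodule A X where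
  L := 0
  R := σ.R
  L_mul a b := by simp
  R_mul := σ.R_mul
  LR_comm a b x := by simp

/-- The bimodule obtained from `σ` by replacing the right action by zero. -/
noncomputable def zeroRight (σ : BanachBimodule A X) : BanachBimodule A X where
  L := σ.L
  R := 0
  L_mul := σ.L_mul
  R_mul a b := by simp
  LR_comm a b x := by simp

section RestrictScalars

variable {A' : Type*} [NonUnitalNormedRing A'] [NormedSpace ℂ A']

/-- Restriction of scalars of a Banach bimodule along a continuous homomorphism `π`. -/
noncomputable def restrictScalars (σ : BanachBimodule A' X) (π : A →L[ℂ] A')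
    (hπ : ∀ a b, π (a * b) = π a * π b) : BanachBimodule A X where
  L := σ.L.comp π
  R := σ.R.comp π
  L_mul a b := by simp [hπ, σ.L_mul]
  R_mul a b := by simp [hπ, σ.R_mul]
  LR_comm a b x := σ.LR_comm _ _ x

@[simp]
theorem restrictScalars_L_apply (σ : BanachBimodule A' X) (π : A →L[ℂ] A')
    (hπ : ∀ a b, π (a * b) = π a * π b) (a : A) :
    (σ.restrictScalars π hπ).L a = σ.L (π a) := rfl

@[simp]
theorem restrictScalars_R_apply (σ : BanachBimodule A' X) (π : A →L[ℂ] A')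
    (hπ : ∀ a b, π (a * b) = π a * π b) (a : A) :
    (σ.restrictScalars π hπ).R a = σ.R (π a) := rfl

end RestrictScalars

variable (A) [IsScalarTower ℂ A A] [SMulCommClass ℂ A A]

/-- The algebra `A` as a Banach bimodule over itself. -/
noncomputable def self : BanachBimodule A A where
  L := ContinuousLinearMap.mul ℂ A
  R := (ContinuousLinearMap.mul ℂ A).flip
  L_mul a b := by ext; simp [mul_assoc]
  R_mul a b := by ext; simp [mul_assoc]
  LR_comm a b x := by simp [mul_assoc]

variable {A}

@[simp]
theorem self_L_apply (a b : A) : (self A).L a b = a * b := rfl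

@[simp]
theorem self_R_apply (a b : A) : (self A).R a b = b * a := rfl

end BanachBimodule

/-- The operator on `E × F` given by a lower triangular matrix with diagonal `(p, q)` and
off-diagonal entry `r : E → F`, as a function of `((p, q), r)`. -/
noncomputable def lowerTriangular {E F : Type*} [NormedAddCommGroup E] [NormedSpace ℂ E]
    [NormedAddCommGroup F] [NormedSpace ℂ F] :
    ((E →L[ℂ] E) × (F →L[ℂ] F)) × (E →L[ℂ] F) →L[ℂ] E × F →L[ℂ] E × F :=
  (prodMapL ℂ E E F F).coprod
    ((compL ℂ (E × F) F (E × F) (inr ℂ E F)).comp ((compL ℂ (E × F) E F).flip (fst ℂ E F)))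

@[simp]
theorem lowerTriangular_apply {E F : Type*} [NormedAddCommGroup E] [NormedSpace ℂ E]
    [NormedAddCommGroup F] [NormedSpace ℂ F] (p : E →L[ℂ] E) (q : F →L[ℂ] F) (r : E →L[ℂ] F)
    (m : E × F) : lowerTriangular ((p, q), r) m = (p m.1, q m.2 + r m.1) := by
  simp [lowerTriangular, Prod.ext_iff]

namespace BanachBimodule

universe u

variable {A : Type*} {X : Type u} [NonUnitalNormedRing A] [NormedSpace ℂ A]
  [NormedAddCommGroup X] [NormedSpace ℂ X]

/-- The algebra of bounded operators on the bimodule `X` commuting with the right action. -/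
abbrev commutant (σ : BanachBimodule A X) : Subalgebra ℂ (X →L[ℂ] X) :=
  Subalgebra.centralizer ℂ (Set.range σ.R)

/-- The left action of `A` on `X`, with values in the operators commuting with the right action. -/
noncomputable def toCommutant (σ : BanachBimodule A X) : A →L[ℂ] σ.commutant :=
  σ.L.codRestrict σ.commutant.toSubmodule fun a ↦ by
    rintro _ ⟨b, rfl⟩
    ext x
    exact σ.LR_comm a b x

@[simp]
theorem coe_toCommutant (σ : BanachBimodule A X) (a : A) :
    (σ.toCommutant a : X →L[ℂ] X) = σ.L a := rfl

theorem toCommutant_mul (σ : BanachBimodule A X) (a b : A) :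
    σ.toCommutant (a * b) = σ.toCommutant a * σ.toCommutant b :=
  Subtype.ext (σ.L_mul a b)

theorem commutant_apply_R (σ : BanachBimodule A X) (S : σ.commutant) (a : A) (x : X) :
    (S : X →L[ℂ] X) (σ.R a x) = σ.R a ((S : X →L[ℂ] X) x) :=
  congr($(S.2 (σ.R a) ⟨a, rfl⟩) x).symm

/-- The representation space of `BanachBimodule.triangularRep`. -/
abbrev TriangularSpace (σ : BanachBimodule A X) : Type _ :=
  σ.commutant × (X →L[ℂ] ℂ × X)

/-- The representation `(S, f) ↦ (L_a S, f R_a + (D_a S, 0))` attached to a derivation `D` into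
`X*`. -/
noncomputable def triangularRep (σ : BanachBimodule A X) (D : A →L[ℂ] X →L[ℂ] ℂ) :
    A →L[ℂ] σ.TriangularSpace →L[ℂ] σ.TriangularSpace :=
  lowerTriangular.comp
    ((((ContinuousLinearMap.mul ℂ σ.commutant).comp σ.toCommutant).prod
      ((compL ℂ X X (ℂ × X)).flip.comp σ.R)).prod
        (((compL ℂ σ.commutant (X →L[ℂ] X) (X →L[ℂ] ℂ × X)).flip
          σ.commutant.toSubmodule.subtypeL).comp
            ((compL ℂ X X (ℂ × X)).comp ((compL ℂ X ℂ (ℂ × X) (inl ℂ ℂ X)).comp D))))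

theorem triangularRep_apply_fst (σ : BanachBimodule A X) (D : A →L[ℂ] X →L[ℂ] ℂ) (a : A)
    (m : σ.TriangularSpace) : (σ.triangularRep D a m).1 = σ.toCommutant a * m.1 := by
  simp only [triangularRep, comp_apply, prod_apply, lowerTriangular_apply, mul_apply']

theorem triangularRep_apply_snd (σ : BanachBimodule A X) (D : A →L[ℂ] X →L[ℂ] ℂ) (a : A)
    (m : σ.TriangularSpace) (x : X) :
    (σ.triangularRep D a m).2 x = m.2 (σ.R a x) + (D a ((m.1 : X →L[ℂ] X) x), 0) := rfl

theorem triangularRep_mul (σ : BanachBimodule A X) (D : A →L[ℂ] X →L[ℂ] ℂ)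
    (hD : IsDualDerivation σ D) (a b : A) :
    σ.triangularRep D (a * b) = (σ.triangularRep D a).comp (σ.triangularRep D b) := by
  refine ContinuousLinearMap.ext fun m ↦ Prod.ext ?_ (ContinuousLinearMap.ext fun x ↦ ?_)
  · simp only [comp_apply, triangularRep_apply_fst, toCommutant_mul, mul_assoc]
  · simp only [comp_apply, triangularRep_apply_snd, triangularRep_apply_fst, σ.R_mul, hD a b,
      commutant_apply_R, Subalgebra.coe_mul, coe_toCommutant, mul_def, add_assoc,
      Prod.mk_add_mk, add_zero]

theorem triangularRep_apply_one_inr (σ : BanachBimodule A X) (D : A →L[ℂ] X →L[ℂ] ℂ) (a : A) :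
    σ.triangularRep D a (1, inr ℂ ℂ X) = (σ.toCommutant a, (D a).prod (σ.R a)) := by
  refine Prod.ext ?_ (ContinuousLinearMap.ext fun x ↦ ?_)
  · rw [triangularRep_apply_fst, mul_one]
  · simp [triangularRep_apply_snd]

theorem exists_normedRing_factorization (σ : BanachBimodule A X) {D : A →L[ℂ] X →L[ℂ] ℂ}
    (hD : IsDualDerivation σ D) :
    ∃ (M : Type u) (_ : NormedRing M) (_ : NormedAlgebra ℂ M) (ρ : A →L[ℂ] M)
      (L' R' : M →L[ℂ] X →L[ℂ] X) (D' : M →L[ℂ] X →L[ℂ] ℂ), (∀ a b, ρ (a * b) = ρ a * ρ b) ∧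
      (∀ a, L' (ρ a) = σ.L a) ∧ (∀ a, R' (ρ a) = σ.R a) ∧ ∀ a, D' (ρ a) = D a := by
  let ev : (σ.TriangularSpace →L[ℂ] σ.TriangularSpace) →L[ℂ] σ.TriangularSpace :=
    ContinuousLinearMap.apply ℂ σ.TriangularSpace (1, inr ℂ ℂ X)
  have hev (a : A) : ev (σ.triangularRep D a) = (σ.toCommutant a, (D a).prod (σ.R a)) :=
    σ.triangularRep_apply_one_inr D a
  refine ⟨σ.TriangularSpace →L[ℂ] σ.TriangularSpace, inferInstance, inferInstance,
    σ.triangularRep D, σ.commutant.toSubmodule.subtypeL.comp ((fst ℂ _ _).comp ev),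
    (compL ℂ X (ℂ × X) X (snd ℂ ℂ X)).comp ((snd ℂ _ _).comp ev),
    (compL ℂ X (ℂ × X) ℂ (fst ℂ ℂ X)).comp ((snd ℂ _ _).comp ev),
    σ.triangularRep_mul D hD, fun a ↦ ?_, fun a ↦ ?_, fun a ↦ ?_⟩ <;> simp [hev]

end BanachBimodule

noncomputable instance {𝕜 R : Type*} [NormedField 𝕜] [NonUnitalNormedRing R] [NormedSpace 𝕜 R]
    (S : NonUnitalSubalgebra 𝕜 R) : NormedSpace 𝕜 S where
  norm_smul_le c a := norm_smul_le c (a : R)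

theorem exists_surjective_factorization {A R : Type*} [NonUnitalNormedRing A] [NormedSpace ℂ A]
    [NonUnitalNormedRing R] [NormedSpace ℂ R] (ρ : A →L[ℂ] R) (hρ : ∀ a b, ρ (a * b) = ρ a * ρ b) :
    ∃ (S : NonUnitalSubalgebra ℂ R) (π : A →L[ℂ] S) (incl : S →L[ℂ] R),
      (∀ a b, π (a * b) = π a * π b) ∧ Function.Surjective π ∧ ∀ a, incl (π a) = ρ a :=
  let S : NonUnitalSubalgebra ℂ R := NonUnitalAlgHom.range
    ({ ρ.toLinearMap with map_zero' := map_zero ρ, map_mul' := hρ } : A →ₙₐ[ℂ] R)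
  ⟨S, ρ.codRestrict S.toSubmodule fun a ↦ ⟨a, rfl⟩, S.toSubmodule.subtypeL,
    fun a b ↦ Subtype.ext (hρ a b), fun ⟨_, a, ha⟩ ↦ ⟨a, Subtype.ext ha⟩, fun _ ↦ rfl⟩

theorem Amenable.isInnerDualDerivation_of_factor {A A' : Type*} {X : Type} [NonUnitalNormedRing A]
    [NormedSpace ℂ A] [NonUnitalNormedRing A'] [NormedSpace ℂ A'] [NormedAddCommGroup X]
    [NormedSpace ℂ X] [CompleteSpace X] (hA' : Amenable A') {σ : BanachBimodule A X}
    {D : A →L[ℂ] X →L[ℂ] ℂ} (hD : IsDualDerivation σ D) (π : A →L[ℂ] A')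
    (hπ : ∀ a b, π (a * b) = π a * π b) (hπs : Function.Surjective π)
    (L' R' : A' →L[ℂ] X →L[ℂ] X) (D' : A' →L[ℂ] X →L[ℂ] ℂ)
    (hL : ∀ a, L' (π a) = σ.L a) (hR : ∀ a, R' (π a) = σ.R a) (hD' : ∀ a, D' (π a) = D a) :
    IsInnerDualDerivation σ D := by
  let σ' : BanachBimodule A' X :=
    { L := L'
      R := R'
      L_mul := hπs.forall₂.2 fun a b ↦ by simp only [← hπ, hL, σ.L_mul]
      R_mul := hπs.forall₂.2 fun a b ↦ by simp only [← hπ, hR, σ.R_mul]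
      LR_comm := hπs.forall₂.2 fun a b ↦ by simpa only [hL, hR] using σ.LR_comm a b }
  obtain ⟨f, hf⟩ := hA' X _ _ inferInstance σ' D' <| hπs.forall₂.2 fun a b ↦ by
    simpa only [σ', ← hπ, hL, hR, hD'] using hD a b
  exact ⟨f, fun a ↦ by simpa only [σ', hL, hR, hD'] using hf (π a)⟩

theorem Amenable.of_forall_surjective {A : Type*} [NonUnitalNormedRing A] [NormedSpace ℂ A]
    (h : ∀ (A' : Type) [NonUnitalNormedRing A'] [NormedSpace ℂ A'] [IsScalarTower ℂ A' A']
      [SMulCommClass ℂ A' A'] (π : A →L[ℂ] A'), (∀ a b, π (a * b) = π a * π b) →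
      Function.Surjective π → Amenable A') : Amenable A := by
  intro X _ _ _ σ D hD
  obtain ⟨M, _, _, ρ, L', R', D', hρ, hL, hR, hD'⟩ := σ.exists_normedRing_factorization hD
  obtain ⟨A', π, incl, hπ, hπs, hincl⟩ := exists_surjective_factorization ρ hρ
  exact (h A' π hπ hπs).isInnerDualDerivation_of_factor hD π hπ hπs
    (L'.comp incl) (R'.comp incl) (D'.comp incl)
    (by simp [hincl, hL]) (by simp [hincl, hR]) (by simp [hincl, hD'])

theorem Amenable.of_subsingleton {A : Type*} [NonUnitalNormedRing A] [NormedSpace ℂ A]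
    [Subsingleton A] : Amenable A :=
  fun X _ _ _ σ D _ ↦ ⟨0, fun a x ↦ by simp [Subsingleton.elim a 0]⟩

/-- Amenability of `A ⊗̂ B`, tested on derivations into duals of bimodules `X ⊗̂ Y` and written on
elementary tensors: `Δ a b x y` is the value at `x ⊗ y` of the derivation at `a ⊗ b`, and `F` is
the functional on `X ⊗̂ Y` implementing it. No tensor product is mentioned, so the notion makes
sense for incomplete algebras and passes to their homomorphic images. -/
def TensorAmenable (A B : Type*) [NonUnitalNormedRing A] [NormedSpace ℂ A]
    [NonUnitalNormedRing B] [NormedSpace ℂ B] : Prop :=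
  ∀ (X Y : Type) [NormedAddCommGroup X] [NormedSpace ℂ X] [NormedAddCommGroup Y] [NormedSpace ℂ Y]
    (σ : BanachBimodule A X) (τ : BanachBimodule B Y) (Δ : A →L[ℂ] B →L[ℂ] X →L[ℂ] Y →L[ℂ] ℂ),
    (∀ a a' b b' x y, Δ (a * a') (b * b') x y =
      Δ a' b' (σ.R a x) (τ.R b y) + Δ a b (σ.L a' x) (τ.L b' y)) →
    ∃ F : X →L[ℂ] Y →L[ℂ] ℂ, ∀ a b x y,
      Δ a b x y = F (σ.R a x) (τ.R b y) - F (σ.L a x) (τ.L b y)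

theorem Amenable.exists_bidual_inner {A : Type*} {X : Type} [NonUnitalNormedRing A]
    [NormedSpace ℂ A] [NormedAddCommGroup X] [NormedSpace ℂ X] (hA : Amenable A)
    (σ : BanachBimodule A X) (d : A →L[ℂ] X)
    (hd : ∀ a b, d (a * b) = σ.L a (d b) + σ.R b (d a)) :
    ∃ Λ : (X →L[ℂ] ℂ) →L[ℂ] ℂ, ∀ a (f : X →L[ℂ] ℂ),
      f (d a) = Λ (f.comp (σ.L a)) - Λ (f.comp (σ.R a)) :=
  hA _ _ _ inferInstance σ.dual ((inclusionInDoubleDual ℂ X).comp d) fun a b f ↦ by simp [hd]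

section BilinearForms

variable {X Y : Type*} [NormedAddCommGroup X] [NormedSpace ℂ X] [NormedAddCommGroup Y]
  [NormedSpace ℂ Y]

/-- Precomposition of bilinear forms `w` on `X × Y` with a pair of operators: `w(p ·, q ·)`. -/
noncomputable def formPrecomp : (X →L[ℂ] X) →L[ℂ] (Y →L[ℂ] Y) →L[ℂ]
    (X →L[ℂ] Y →L[ℂ] ℂ) →L[ℂ] X →L[ℂ] Y →L[ℂ] ℂ :=
  (compL ℂ _ _ _).bilinearComp (compL ℂ X X (Y →L[ℂ] ℂ)).flip
    ((compL ℂ X (Y →L[ℂ] ℂ) (Y →L[ℂ] ℂ)).comp (compL ℂ Y Y ℂ).flip)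

theorem formPrecomp_apply (p : X →L[ℂ] X) (q : Y →L[ℂ] Y) (w : X →L[ℂ] Y →L[ℂ] ℂ) (x : X) (y : Y) :
    formPrecomp p q w x y = w (p x) (q y) := rfl

/-- Evaluation of bilinear forms on `X × Y`: the bilinear form `w ↦ w x y` in `x` and `y`. -/
noncomputable def formEval : X →L[ℂ] Y →L[ℂ] (X →L[ℂ] Y →L[ℂ] ℂ) →L[ℂ] ℂ :=
  (flipₗᵢ ℂ (X →L[ℂ] Y →L[ℂ] ℂ) Y ℂ : _ →L[ℂ] _).comp
    (ContinuousLinearMap.id ℂ (X →L[ℂ] Y →L[ℂ] ℂ)).flip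

theorem formEval_apply (x : X) (y : Y) (w : X →L[ℂ] Y →L[ℂ] ℂ) : formEval x y w = w x y := rfl

theorem formEval_comp_formPrecomp (p : X →L[ℂ] X) (q : Y →L[ℂ] Y) (x : X) (y : Y) :
    (formEval x y).comp (formPrecomp p q) = formEval (p x) (q y) := rfl

end BilinearForms

namespace IsProjTensorProduct

variable {A B T : Type*} [NonUnitalNormedRing A] [NormedSpace ℂ A] [NonUnitalNormedRing B]
  [NormedSpace ℂ B] [NonUnitalNormedRing T] [NormedSpace ℂ T] [CompleteSpace T]

/-- The linearization on `T` of a bounded bilinear map on `A × B`. -/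
noncomputable def liftCLM (P : IsProjTensorProduct A B T) {E : Type} [NormedAddCommGroup E]
    [NormedSpace ℂ E] [CompleteSpace E] (φ : A →L[ℂ] B →L[ℂ] E) : T →L[ℂ] E :=
  (P.lift E _ _ inferInstance φ).choose

@[simp]
theorem liftCLM_ι (P : IsProjTensorProduct A B T) {E : Type} [NormedAddCommGroup E]
    [NormedSpace ℂ E] [CompleteSpace E] (φ : A →L[ℂ] B →L[ℂ] E) (a : A) (b : B) :
    P.liftCLM φ (P.ι a b) = φ a b :=
  (P.lift E _ _ inferInstance φ).choose_spec.1 a b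

variable {E : Type*} [NormedAddCommGroup E] [NormedSpace ℂ E]

theorem clm_ext (P : IsProjTensorProduct A B T) {f g : T →L[ℂ] E}
    (h : ∀ a b, f (P.ι a b) = g (P.ι a b)) : f = g :=
  ContinuousLinearMap.ext_on P.dense_span <| by rintro _ ⟨p, rfl⟩; exact h p.1 p.2

theorem bilin_ext (P : IsProjTensorProduct A B T) {f g : T →L[ℂ] T →L[ℂ] E}
    (h : ∀ a a' b b', f (P.ι a b) (P.ι a' b') = g (P.ι a b) (P.ι a' b')) (s t : T) :
    f s t = g s t := by
  have hfg : f = g := P.clm_ext fun a b ↦ P.clm_ext fun a' b' ↦ h a a' b b'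
  rw [hfg]

theorem map_mul_ext (P : IsProjTensorProduct A B T) [IsScalarTower ℂ T T] [SMulCommClass ℂ T T]
    {f : T →L[ℂ] E} {g : T →L[ℂ] T →L[ℂ] E}
    (h : ∀ a a' b b', f (P.ι (a * a') (b * b')) = g (P.ι a b) (P.ι a' b')) (s t : T) :
    f (s * t) = g s t :=
  P.bilin_ext (f := (compL ℂ T T E f).comp (ContinuousLinearMap.mul ℂ T))
    (fun a a' b b' ↦ by simp [P.ι_mul, h]) s t

variable {W : Type} [NormedAddCommGroup W] [NormedSpace ℂ W] [CompleteSpace W]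
  {X Y : Type} [NormedAddCommGroup X] [NormedSpace ℂ X] [NormedAddCommGroup Y]
  [NormedSpace ℂ Y] [IsScalarTower ℂ T T] [SMulCommClass ℂ T T]

/-- The `T`-bimodule structure on `W` determined by the actions of elementary tensors. -/
noncomputable def liftBimodule (P : IsProjTensorProduct A B T) (l r : A →L[ℂ] B →L[ℂ] W →L[ℂ] W)
    (hl : ∀ a a' b b', l (a * a') (b * b') = (l a b).comp (l a' b'))
    (hr : ∀ a a' b b', r (a * a') (b * b') = (r a' b').comp (r a b))
    (hlr : ∀ a a' b b', (r a' b').comp (l a b) = (l a b).comp (r a' b')) :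
    BanachBimodule T W where
  L := P.liftCLM l
  R := P.liftCLM r
  L_mul := P.map_mul_ext (g := (compL ℂ W W W).bilinearComp (P.liftCLM l) (P.liftCLM l))
    fun a a' b b' ↦ by simp [hl]
  R_mul := P.map_mul_ext (g := (compL ℂ W W W).flip.bilinearComp (P.liftCLM r) (P.liftCLM r))
    fun a a' b b' ↦ by simp [hr]
  LR_comm s t w := congr($(P.bilin_ext
    (f := (compL ℂ W W W).flip.bilinearComp (P.liftCLM l) (P.liftCLM r))
    (g := (compL ℂ W W W).bilinearComp (P.liftCLM l) (P.liftCLM r))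
    (fun a a' b b' ↦ by simp [hlr]) s t) w)

/-- The `T`-bimodule of bounded bilinear forms on `X × Y`, that is, the dual of `X ⊗̂ Y`, for an
`A`-bimodule `X` and a `B`-bimodule `Y`. -/
noncomputable def formBimodule (P : IsProjTensorProduct A B T) (σ : BanachBimodule A X)
    (τ : BanachBimodule B Y) : BanachBimodule T (X →L[ℂ] Y →L[ℂ] ℂ) :=
  P.liftBimodule (formPrecomp.bilinearComp σ.R τ.R) (formPrecomp.bilinearComp σ.L τ.L)
    (fun a a' b b' ↦ by ext; simp [formPrecomp_apply, σ.R_mul, τ.R_mul])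
    (fun a a' b b' ↦ by ext; simp [formPrecomp_apply, σ.L_mul, τ.L_mul])
    (fun a a' b b' ↦ by ext; simp [formPrecomp_apply, σ.LR_comm, τ.LR_comm])

@[simp]
theorem formBimodule_L_ι (P : IsProjTensorProduct A B T) (σ : BanachBimodule A X)
    (τ : BanachBimodule B Y) (a : A) (b : B) :
    (P.formBimodule σ τ).L (P.ι a b) = formPrecomp (σ.R a) (τ.R b) := by
  simp [formBimodule, liftBimodule]

@[simp]
theorem formBimodule_R_ι (P : IsProjTensorProduct A B T) (σ : BanachBimodule A X)
    (τ : BanachBimodule B Y) (a : A) (b : B) :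
    (P.formBimodule σ τ).R (P.ι a b) = formPrecomp (σ.L a) (τ.L b) := by
  simp [formBimodule, liftBimodule]

theorem tensorAmenable (P : IsProjTensorProduct A B T) (hT : Amenable T) : TensorAmenable A B := by
  intro X Y _ _ _ _ σ τ Δ hΔ
  let d : T →L[ℂ] X →L[ℂ] Y →L[ℂ] ℂ := P.liftCLM Δ
  have hd (s t : T) : d (s * t) = (P.formBimodule σ τ).L s (d t) + (P.formBimodule σ τ).R t (d s) :=
    P.map_mul_ext
      (g := (ContinuousLinearMap.id ℂ _).bilinearComp (P.formBimodule σ τ).L d +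
        ((ContinuousLinearMap.id ℂ _).bilinearComp (P.formBimodule σ τ).R d).flip)
      (fun a a' b b' ↦ by ext; simp [d, hΔ, formPrecomp_apply]) s t
  obtain ⟨Λ, hΛ⟩ := hT.exists_bidual_inner (P.formBimodule σ τ) d hd
  refine ⟨(compL ℂ Y _ ℂ Λ).comp formEval, fun a b x y ↦ ?_⟩
  simpa [d, formEval_comp_formPrecomp, formEval_apply] using hΛ (P.ι a b) (formEval x y)

end IsProjTensorProduct

section VirtualUnits

open BanachBimodule

variable {B : Type*} [NonUnitalNormedRing B] [NormedSpace ℂ B] [IsScalarTower ℂ B B]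
  [SMulCommClass ℂ B B]

/-- A right unit of `B**` for the action on `B*`: `e(y·b) = y(b)`, where `(y·b)(c) = y(bc)`. -/
def IsVirtualRightUnit (e : (B →L[ℂ] ℂ) →L[ℂ] ℂ) : Prop :=
  ∀ b y, e ((self B).dual.R b y) = y b

/-- A left unit of `B**` for the action on `B*`: `e(b·y) = y(b)`, where `(b·y)(c) = y(cb)`. -/
def IsVirtualLeftUnit (e : (B →L[ℂ] ℂ) →L[ℂ] ℂ) : Prop :=
  ∀ b y, e ((self B).dual.L b y) = y b

/-- The Arens product of two elements of `B**`: `(u □ v)(y) = u(b ↦ v(y·b))`. -/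
noncomputable def arensMul (u v : (B →L[ℂ] ℂ) →L[ℂ] ℂ) : (B →L[ℂ] ℂ) →L[ℂ] ℂ :=
  u.comp ((compL ℂ B (B →L[ℂ] ℂ) ℂ v).comp (self B).dual.R.flip)

theorem arensMul_apply (u v : (B →L[ℂ] ℂ) →L[ℂ] ℂ) (y : B →L[ℂ] ℂ) :
    arensMul u v y = u (v.comp ((self B).dual.R.flip y)) := rfl

theorem IsVirtualRightUnit.comp_flip {e : (B →L[ℂ] ℂ) →L[ℂ] ℂ} (he : IsVirtualRightUnit e)
    (G : (B →L[ℂ] ℂ) →L[ℂ] ℂ) (b : B) (y : B →L[ℂ] ℂ) :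
    e (G.comp ((self B).dual.R.flip ((self B).dual.R b y))) = G ((self B).dual.R b y) := by
  have h : G.comp ((self B).dual.R.flip ((self B).dual.R b y)) =
      (self B).dual.R b (G.comp ((self B).dual.R.flip y)) := by
    ext c
    simp [(self B).dual.R_mul]
  rw [h, he]
  rfl

theorem IsVirtualLeftUnit.comp_flip {e : (B →L[ℂ] ℂ) →L[ℂ] ℂ} (he : IsVirtualLeftUnit e)
    (G : (B →L[ℂ] ℂ) →L[ℂ] ℂ) (b : B) (y : B →L[ℂ] ℂ) :
    e (G.comp ((self B).dual.L.flip ((self B).dual.L b y))) = G ((self B).dual.L b y) := by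
  have h : G.comp ((self B).dual.L.flip ((self B).dual.L b y)) =
      (self B).dual.L b (G.comp ((self B).dual.L.flip y)) := by
    ext c
    simp [(self B).dual.L_mul]
  rw [h, he]
  rfl

/-- A two-sided virtual unit of `B`: both a left and a right unit of `B**` for the actions
on `B*`. -/
structure IsVirtualUnit (e : (B →L[ℂ] ℂ) →L[ℂ] ℂ) : Prop where
  right : IsVirtualRightUnit e
  left : IsVirtualLeftUnit e

theorem IsVirtualRightUnit.arensMul_apply_R {u : (B →L[ℂ] ℂ) →L[ℂ] ℂ} (hu : IsVirtualRightUnit u)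
    (v : (B →L[ℂ] ℂ) →L[ℂ] ℂ) (b : B) (y : B →L[ℂ] ℂ) :
    arensMul u v ((self B).dual.R b y) = v ((self B).dual.R b y) :=
  hu.comp_flip v b y

theorem IsVirtualLeftUnit.arensMul_apply_L {v : (B →L[ℂ] ℂ) →L[ℂ] ℂ} (hv : IsVirtualLeftUnit v)
    (u : (B →L[ℂ] ℂ) →L[ℂ] ℂ) (b : B) (y : B →L[ℂ] ℂ) :
    arensMul u v ((self B).dual.L b y) = u ((self B).dual.L b y) := by
  have h : v.comp ((self B).dual.R.flip ((self B).dual.L b y)) = (self B).dual.L b y := by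
    ext c
    simpa [(self B).dual.LR_comm] using hv b ((self B).dual.R c y)
  rw [arensMul_apply, h]

theorem isVirtualUnit_add_sub_arensMul {u v : (B →L[ℂ] ℂ) →L[ℂ] ℂ} (hu : IsVirtualRightUnit u)
    (hv : IsVirtualLeftUnit v) : IsVirtualUnit (u + v - arensMul u v) where
  right b y := by simp [hu.arensMul_apply_R, hu b y]
  left b y := by simp [hv.arensMul_apply_L, hv b y]

theorem IsVirtualRightUnit.exists_apply_mul_ne_zero [Nontrivial B] {e : (B →L[ℂ] ℂ) →L[ℂ] ℂ}
    (he : IsVirtualRightUnit e) : ∃ (b c : B) (y : B →L[ℂ] ℂ), y (b * c) ≠ 0 := by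
  obtain ⟨b, hb⟩ := exists_ne (0 : B)
  obtain ⟨y, hy⟩ := SeparatingDual.exists_ne_zero (R := ℂ) hb
  by_contra! h
  have hR : (self B).dual.R b y = 0 := by ext c; exact h b c y
  exact hy (by rw [← he b y, hR, map_zero])

end VirtualUnits

namespace TensorAmenable

open BanachBimodule

theorem map {A A' B B' : Type*} [NonUnitalNormedRing A] [NormedSpace ℂ A] [NonUnitalNormedRing A']
    [NormedSpace ℂ A'] [NonUnitalNormedRing B] [NormedSpace ℂ B] [NonUnitalNormedRing B']
    [NormedSpace ℂ B'] (h : TensorAmenable A B) (π : A →L[ℂ] A') (ρ : B →L[ℂ] B')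
    (hπ : ∀ a a', π (a * a') = π a * π a') (hρ : ∀ b b', ρ (b * b') = ρ b * ρ b')
    (hπs : Function.Surjective π) (hρs : Function.Surjective ρ) : TensorAmenable A' B' := by
  intro X Y _ _ _ _ σ τ Δ hΔ
  obtain ⟨F, hF⟩ := h X Y (σ.restrictScalars π hπ) (τ.restrictScalars ρ hρ) (Δ.bilinearComp π ρ)
    (by simp [hπ, hρ, hΔ])
  exact ⟨F, hπs.forall.2 fun a ↦ hρs.forall.2 fun b ↦ hF a b⟩

section

variable {A : Type*} {B X : Type} [NonUnitalNormedRing A] [NormedSpace ℂ A]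
  [NonUnitalNormedRing B] [NormedSpace ℂ B] [IsScalarTower ℂ B B] [SMulCommClass ℂ B B]
  [NormedAddCommGroup X] [NormedSpace ℂ X]

theorem exists_dualDerivation_mul (h : TensorAmenable A B) (σ : BanachBimodule A X)
    (D : A →L[ℂ] X →L[ℂ] ℂ) (hD : IsDualDerivation σ D) :
    ∃ F : X →L[ℂ] (B →L[ℂ] ℂ) →L[ℂ] ℂ, ∀ a b x y, D a x * y b =
      F (σ.R a x) ((self B).dual.R b y) - F (σ.L a x) ((self B).dual.L b y) :=
  h X (B →L[ℂ] ℂ) σ (self B).dual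
    ((smulRightL ℂ X ((B →L[ℂ] ℂ) →L[ℂ] ℂ)).bilinearComp D (inclusionInDoubleDual ℂ B))
    fun a a' b b' x y ↦ by simp [hD a a' x, add_mul]

end

variable {A B : Type} [NonUnitalNormedRing A] [NormedSpace ℂ A] [IsScalarTower ℂ A A]
  [SMulCommClass ℂ A A] [NonUnitalNormedRing B] [NormedSpace ℂ B] [IsScalarTower ℂ B B]
  [SMulCommClass ℂ B B]

theorem exists_isVirtualRightUnit [Nontrivial A] (h : TensorAmenable A B) :
    ∃ e : (B →L[ℂ] ℂ) →L[ℂ] ℂ, IsVirtualRightUnit e := by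
  obtain ⟨a, ha⟩ := exists_ne (0 : A)
  obtain ⟨x, hx⟩ := SeparatingDual.exists_ne_zero (R := ℂ) ha
  obtain ⟨F, hF⟩ := h.exists_dualDerivation_mul (self A).dual.zeroLeft
    (inclusionInDoubleDual ℂ A) (fun a b x ↦ by simp [zeroLeft])
  refine ⟨(x a)⁻¹ • F ((self A).dual.R a x), fun b y ↦ ?_⟩
  have hxy : x a * y b = F ((self A).dual.R a x) ((self B).dual.R b y) := by
    simpa [zeroLeft] using hF a b x y
  simp [← hxy, hx]

theorem exists_isVirtualLeftUnit [Nontrivial A] (h : TensorAmenable A B) :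
    ∃ e : (B →L[ℂ] ℂ) →L[ℂ] ℂ, IsVirtualLeftUnit e := by
  obtain ⟨a, ha⟩ := exists_ne (0 : A)
  obtain ⟨x, hx⟩ := SeparatingDual.exists_ne_zero (R := ℂ) ha
  obtain ⟨F, hF⟩ := h.exists_dualDerivation_mul (self A).dual.zeroRight
    (inclusionInDoubleDual ℂ A) (fun a b x ↦ by simp [zeroRight])
  refine ⟨-((x a)⁻¹ • F ((self A).dual.L a x)), fun b y ↦ ?_⟩
  have hxy : x a * y b = -F ((self A).dual.L a x) ((self B).dual.L b y) := by
    simpa [zeroRight] using hF a b x y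
  rw [neg_apply, smul_apply, smul_eq_mul, ← mul_neg, ← hxy, inv_mul_cancel_left₀ hx]

theorem exists_isVirtualUnit [Nontrivial A] (h : TensorAmenable A B) :
    ∃ e : (B →L[ℂ] ℂ) →L[ℂ] ℂ, IsVirtualUnit e :=
  let ⟨_, hu⟩ := h.exists_isVirtualRightUnit
  let ⟨_, hv⟩ := h.exists_isVirtualLeftUnit
  ⟨_, isVirtualUnit_add_sub_arensMul hu hv⟩

theorem amenable [Nontrivial A] [Nontrivial B] (h : TensorAmenable A B) : Amenable A := by
  intro X _ _ _ σ D hD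
  obtain ⟨U, hU⟩ := h.exists_isVirtualUnit
  obtain ⟨c, d, z, hz⟩ := hU.right.exists_apply_mul_ne_zero
  let φ : B →L[ℂ] ℂ := (self B).dual.L d ((self B).dual.R c z)
  have hφ : φ = (self B).dual.R c ((self B).dual.L d z) := ((self B).dual.LR_comm d c z).symm
  have hUφ : U φ ≠ 0 := by simpa [φ, hU.left d] using hz
  have hR (G : (B →L[ℂ] ℂ) →L[ℂ] ℂ) : U (G.comp ((self B).dual.R.flip φ)) = G φ := by
    rw [hφ, hU.right.comp_flip]
  have hL (G : (B →L[ℂ] ℂ) →L[ℂ] ℂ) : U (G.comp ((self B).dual.L.flip φ)) = G φ :=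
    hU.left.comp_flip G d _
  obtain ⟨F, hF⟩ := h.exists_dualDerivation_mul σ D hD
  refine ⟨(U φ)⁻¹ • F.flip φ, fun a x ↦ ?_⟩
  have hDφ : D a x • φ = (F (σ.R a x)).comp ((self B).dual.R.flip φ) -
      (F (σ.L a x)).comp ((self B).dual.L.flip φ) := by
    ext b
    exact hF a b x φ
  have hDU : D a x * U φ = F (σ.R a x) φ - F (σ.L a x) φ := by
    simpa [hR, hL] using congr(U $hDφ)
  simp only [smul_apply, flip_apply, smul_eq_mul, ← mul_sub, ← hDU]
  field_simp

end TensorAmenable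

theorem stmt5_general {A T : Type*} [NonUnitalNormedRing A] [NormedSpace ℂ A]
    [NonUnitalNormedRing T] [NormedSpace ℂ T] [IsScalarTower ℂ T T] [SMulCommClass ℂ T T]
    [CompleteSpace T] (P : IsProjTensorProduct A Aᵐᵒᵖ T) (hT : Amenable T) : Amenable A := by
  refine Amenable.of_forall_surjective fun A' _ _ _ _ π hπ hπs ↦ ?_
  let πop : Aᵐᵒᵖ →L[ℂ] A'ᵐᵒᵖ :=
    (opContinuousLinearEquiv ℂ (M := A') : A' →L[ℂ] A'ᵐᵒᵖ).comp
      (π.comp ((opContinuousLinearEquiv ℂ (M := A)).symm : Aᵐᵒᵖ →L[ℂ] A))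
  have hA' : TensorAmenable A' A'ᵐᵒᵖ := (P.tensorAmenable hT).map π πop hπ
    (fun a b ↦ congrArg op (hπ b.unop a.unop)) hπs
    (op_surjective.comp (hπs.comp unop_surjective))
  cases subsingleton_or_nontrivial A'
  · exact Amenable.of_subsingleton
  · exact hA'.amenable

/-- if `A ⊗̂ Aᵒᵖ` is amenable and both the topology of the seminorms
`ρ_a(b) = ‖ab‖` and that of `γ_a(b) = ‖ba‖` are stronger (finer) than the weak
topology on `A`, then `A` is amenable. -/
theorem stmt5 {A T : Type*} [NonUnitalNormedRing A] [NormedSpace ℂ A] [IsScalarTower ℂ A A] [SMulCommClass ℂ A A] [CompleteSpace A] [NonUnitalNormedRing T] [NormedSpace ℂ T] [IsScalarTower ℂ T T] [SMulCommClass ℂ T T] [CompleteSpace T]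
    (P : IsProjTensorProduct A Aᵐᵒᵖ T) (hT : Amenable T)
    (hρ : (SeminormFamily.moduleFilterBasis
        ((fun a : A => (normSeminorm ℂ A).comp (LinearMap.mulLeft ℂ a)) : SeminormFamily ℂ A A)).topology ≤ TopologicalSpace.induced (fun (a : A) (f : A →L[ℂ] ℂ) => f a) Pi.topologicalSpace)
    (hγ : (SeminormFamily.moduleFilterBasis
        ((fun a : A => (normSeminorm ℂ A).comp (LinearMap.mulRight ℂ a)) : SeminormFamily ℂ A A)).topology ≤ TopologicalSpace.induced (fun (a : A) (f : A →L[ℂ] ℂ) => f a) Pi.topologicalSpace) :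
    Amenable A :=
  stmt5_general P hT
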